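/- arXiv:2509.21032 — 2 statements merged into one kernel-verified Lean document; each statement's English description precedes it below -/
import Mathlib

section
/- (Shapley Feature Value characterization, Theorem 1.) Let N be a finite set of n features. Suppose ψ assigns to every game v : 𝒫(N) → ℝ with v(∅) = 0 a vector (ψ_a(v))_{a ∈ N} satisfying: (i) transferability/efficiency, ∑_{a ∈ N} ψ_a(v) = v(N); (ii) null contribution, if v(S ∪ {a}) = v(S) for all S ⊆ N \ {a} then ψ_a(v) = 0; (iii) symmetry, if v(S ∪ {a}) = v(S ∪ {b}) for all S ⊆ N \ {a,b} then ψ_a(v) = ψ_b(v); and (iv) linearity, ψ_a(v₁ + v₂) = ψ_a(v₁) + ψ_a(v₂) and ψ_a(c·v) = c·ψ_a(v) for all games v₁, v₂, v, all c ∈ ℝ, and all a ∈ N. Then ψ is the Shapley feature value: for every game v and every a ∈ N, ψ_a(v) = ∑_{S ⊆ N \ {a}} (|S|!(n−|S|−1)!/n!)(v(S ∪ {a}) − v(S)). -/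
/-!
The games `coalitionGame T` (equal to `1` on the single coalition `T` and `0` elsewhere), for
nonempty `T ⊆ N`, span all games up to games vanishing on the subsets of `N`, and `ψ` kills the
latter by null contribution. So it suffices to compute `ψ` on `coalitionGame T`.

By symmetry, `ψ (coalitionGame T)` is constant on `T`, with value `p T` say. If `b ∈ N \ T`, then
`b` is null in `coalitionGame T + coalitionGame (insert b T)`, so
`ψ (coalitionGame T) b = - p (insert b T)`. Efficiency then gives `n * p N = 1` and
`|T| * p T = (n - |T|) * p (insert b T)` for `T ≠ N`, and downward induction on `|T|` yields
`p T = (|T| - 1)! (n - |T|)! / n!`. Expanding a game in the `coalitionGame T` and pairing `S` with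
`insert a S` produces the Shapley formula.
-/

open Finset

/-- The Shapley feature value of feature `a` in the game `v` over `N`. -/
noncomputable def shapleyFeatureValue {ι : Type*} [DecidableEq ι]
    (N : Finset ι) (v : Finset ι → ℝ) (a : ι) : ℝ :=
  ∑ S ∈ (N.erase a).powerset,
    ((Nat.factorial S.card * Nat.factorial (N.card - S.card - 1) : ℝ) /
        (Nat.factorial N.card : ℝ)) * (v (insert a S) - v S)

/-- The game worth `1` to the coalition `T` and `0` to every other coalition. -/
def coalitionGame {ι : Type*} [DecidableEq ι] (T : Finset ι) : Finset ι → ℝ :=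
  fun S => if S = T then 1 else 0

lemma coalitionGame_empty {ι : Type*} [DecidableEq ι] {T : Finset ι} (hT : T.Nonempty) :
    coalitionGame T ∅ = 0 := by
  simp [coalitionGame, hT.ne_empty.symm]

/-- A feature outside `T` is null in `coalitionGame T + coalitionGame (insert b T)`. -/
lemma value_coalitionGame_of_notMem {ι : Type*} [DecidableEq ι]
    (N : Finset ι) (ψ : (Finset ι → ℝ) → ι → ℝ)
    (hnull : ∀ v : Finset ι → ℝ, v ∅ = 0 → ∀ a ∈ N,
      (∀ S ⊆ N.erase a, v (insert a S) = v S) → ψ v a = 0)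
    (hadd : ∀ v₁ v₂ : Finset ι → ℝ, v₁ ∅ = 0 → v₂ ∅ = 0 → ∀ a ∈ N,
      ψ (fun S => v₁ S + v₂ S) a = ψ v₁ a + ψ v₂ a)
    {T : Finset ι} (hT : T.Nonempty) {b : ι} (hb : b ∈ N) (hbT : b ∉ T) :
    ψ (coalitionGame T) b = - ψ (coalitionGame (insert b T)) b := by
  have h0 := coalitionGame_empty hT
  have h1 := coalitionGame_empty (insert_nonempty b T)
  have h := hadd _ _ h0 h1 b hb
  rw [hnull _ (by simp [h0, h1]) b hb] at h
  · linarith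
  · intro S hS
    have hbS : b ∉ S := fun hh => by simpa using hS hh
    have e1 : insert b S ≠ T := fun e => hbT (e ▸ mem_insert_self b S)
    have e2 : S ≠ insert b T := fun e => hbS (e ▸ mem_insert_self b T)
    have e3 : insert b S = insert b T ↔ S = T := by
      refine ⟨fun e => ?_, fun e => by rw [e]⟩
      rw [← erase_insert hbS, e, erase_insert hbT]
    simp [coalitionGame, e1, e2, e3]

lemma value_coalitionGame_const {ι : Type*} [DecidableEq ι]
    (N : Finset ι) (ψ : (Finset ι → ℝ) → ι → ℝ)
    (hsym : ∀ v : Finset ι → ℝ, v ∅ = 0 → ∀ a ∈ N, ∀ b ∈ N,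
      (∀ S ⊆ (N.erase a).erase b, v (insert a S) = v (insert b S)) →
        ψ v a = ψ v b)
    {T : Finset ι} (hTN : T ⊆ N) {a b : ι} (ha : a ∈ T) (hb : b ∈ T) :
    ψ (coalitionGame T) b = ψ (coalitionGame T) a := by
  by_cases hab : b = a
  · rw [hab]
  refine hsym _ (coalitionGame_empty ⟨a, ha⟩) b (hTN hb) a (hTN ha) fun S hS => ?_
  -- Neither coalition is `T`: each of them misses one of `a`, `b`.
  have e1 : insert b S ≠ T := fun e => by
    have h2 : a ∉ S := fun hh => by simpa using hS hh
    grind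
  have e2 : insert a S ≠ T := fun e => by
    have h2 : b ∉ S := fun hh => by simpa using hS hh
    grind
  simp [coalitionGame, e1, e2]

/-- The value of a member of `T` in `coalitionGame T`, by induction on `k = |N| - |T|`. -/
lemma value_coalitionGame_of_mem {ι : Type*} [DecidableEq ι]
    (N : Finset ι) (ψ : (Finset ι → ℝ) → ι → ℝ)
    (heff : ∀ v : Finset ι → ℝ, v ∅ = 0 → ∑ a ∈ N, ψ v a = v N)
    (hnull : ∀ v : Finset ι → ℝ, v ∅ = 0 → ∀ a ∈ N,
      (∀ S ⊆ N.erase a, v (insert a S) = v S) → ψ v a = 0)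
    (hsym : ∀ v : Finset ι → ℝ, v ∅ = 0 → ∀ a ∈ N, ∀ b ∈ N,
      (∀ S ⊆ (N.erase a).erase b, v (insert a S) = v (insert b S)) →
        ψ v a = ψ v b)
    (hadd : ∀ v₁ v₂ : Finset ι → ℝ, v₁ ∅ = 0 → v₂ ∅ = 0 → ∀ a ∈ N,
      ψ (fun S => v₁ S + v₂ S) a = ψ v₁ a + ψ v₂ a)
    (k : ℕ) : ∀ T ⊆ N, T.card + k = N.card → ∀ a ∈ T,
      ψ (coalitionGame T) a =
        (Nat.factorial (T.card - 1) * Nat.factorial k : ℝ) / (Nat.factorial N.card : ℝ) := by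
  induction k with
  | zero =>
    intro T hTN hc a ha
    obtain rfl : T = N := eq_of_subset_of_card_le hTN (by omega)
    have h := heff _ (coalitionGame_empty ⟨a, ha⟩)
    rw [sum_congr rfl fun b hb => value_coalitionGame_const T ψ hsym hTN ha hb,
      sum_const, nsmul_eq_mul, show coalitionGame T T = 1 from if_pos rfl] at h
    obtain ⟨m, hm⟩ : ∃ m, T.card = m + 1 :=
      Nat.exists_eq_succ_of_ne_zero (card_ne_zero_of_mem ha)
    rw [hm] at h ⊢
    rw [eq_div_iff (by positivity)]
    simp only [Nat.factorial_succ, Nat.add_sub_cancel, Nat.factorial_zero]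
    push_cast at h ⊢
    linear_combination (m.factorial : ℝ) * h
  | succ k ih =>
    intro T hTN hc a ha
    have hne : N ≠ T := by rintro rfl; omega
    have h := heff _ (coalitionGame_empty ⟨a, ha⟩)
    rw [show coalitionGame T N = 0 from if_neg hne, ← sum_sdiff hTN] at h
    have hout : ∀ b ∈ N \ T, ψ (coalitionGame T) b =
        -((Nat.factorial T.card * Nat.factorial k : ℝ) / (Nat.factorial N.card : ℝ)) := by
      intro b hb
      obtain ⟨hbN, hbT⟩ := mem_sdiff.1 hb
      have hcard : (insert b T).card = T.card + 1 := card_insert_of_notMem hbT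
      rw [value_coalitionGame_of_notMem N ψ hnull hadd ⟨a, ha⟩ hbN hbT,
        ih (insert b T) (insert_subset hbN hTN) (by omega) b (mem_insert_self b T), hcard,
        Nat.add_sub_cancel]
    have hdiff : (N \ T).card = k + 1 := by
      rw [card_sdiff_of_subset hTN]; omega
    rw [sum_congr rfl fun b hb => value_coalitionGame_const N ψ hsym hTN ha hb,
      sum_congr rfl hout, sum_const, sum_const, nsmul_eq_mul, nsmul_eq_mul, hdiff] at h
    obtain ⟨m, hm⟩ : ∃ m, T.card = m + 1 :=
      Nat.exists_eq_succ_of_ne_zero (card_ne_zero_of_mem ha)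
    rw [hm] at h ⊢
    simp only [Nat.factorial_succ, Nat.add_sub_cancel] at h ⊢
    push_cast at h ⊢
    have hm0 : (m + 1 : ℝ) ≠ 0 := by positivity
    apply mul_left_cancel₀ hm0
    linear_combination h

lemma value_sum_coalitionGame {ι : Type*} [DecidableEq ι]
    (N : Finset ι) (ψ : (Finset ι → ℝ) → ι → ℝ)
    (hadd : ∀ v₁ v₂ : Finset ι → ℝ, v₁ ∅ = 0 → v₂ ∅ = 0 → ∀ a ∈ N,
      ψ (fun S => v₁ S + v₂ S) a = ψ v₁ a + ψ v₂ a)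
    (hsmul : ∀ v : Finset ι → ℝ, v ∅ = 0 → ∀ c : ℝ, ∀ a ∈ N,
      ψ (fun S => c * v S) a = c * ψ v a)
    (v : Finset ι → ℝ) {a : ι} (ha : a ∈ N) (F : Finset (Finset ι)) (hF : ∅ ∉ F) :
    ψ (fun S => ∑ T ∈ F, v T * coalitionGame T S) a =
      ∑ T ∈ F, v T * ψ (coalitionGame T) a := by
  induction F using Finset.induction_on with
  | empty => simpa using hsmul (fun _ => 0) rfl 0 a ha
  | insert T F hTF ih =>
    have hF' : ∅ ∉ F := fun h => hF (mem_insert_of_mem h)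
    have hT : coalitionGame T ∅ = 0 := coalitionGame_empty <|
      nonempty_iff_ne_empty.2 fun e => hF (e ▸ mem_insert_self T F)
    have hsum : ∑ T ∈ F, v T * coalitionGame T ∅ = 0 :=
      sum_eq_zero fun U hU => by
        rw [coalitionGame_empty (nonempty_iff_ne_empty.2 fun e => hF' (e ▸ hU)), mul_zero]
    simp only [sum_insert hTF]
    rw [hadd (fun S => v T * coalitionGame T S) (fun S => ∑ T ∈ F, v T * coalitionGame T S)
      (by simp [hT]) hsum a ha, hsmul _ hT _ a ha, ih hF']

/-- Only the worth of the subsets of `N` matters. -/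
lemma value_congr {ι : Type*} [DecidableEq ι]
    (N : Finset ι) (ψ : (Finset ι → ℝ) → ι → ℝ)
    (hnull : ∀ v : Finset ι → ℝ, v ∅ = 0 → ∀ a ∈ N,
      (∀ S ⊆ N.erase a, v (insert a S) = v S) → ψ v a = 0)
    (hadd : ∀ v₁ v₂ : Finset ι → ℝ, v₁ ∅ = 0 → v₂ ∅ = 0 → ∀ a ∈ N,
      ψ (fun S => v₁ S + v₂ S) a = ψ v₁ a + ψ v₂ a)
    {v w : Finset ι → ℝ} (hv : v ∅ = 0) (hvw : ∀ S ⊆ N, v S = w S) {a : ι} (ha : a ∈ N) :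
    ψ v a = ψ w a := by
  have hw : w ∅ = 0 := by rw [← hvw ∅ (empty_subset N), hv]
  have h := hadd w (fun S => v S - w S) hw (by simp [hv, hw]) a ha
  simp only [add_sub_cancel] at h
  rw [h, hnull (fun S => v S - w S) (by simp [hv, hw]) a ha, add_zero]
  intro S hS
  have hSN : S ⊆ N := hS.trans (erase_subset a N)
  simp [hvw S hSN, hvw _ (insert_subset ha hSN)]

/-- Shapley Feature Value characterization (Theorem 1): any value `ψ`
satisfying transferability/efficiency, null contribution, symmetry and
linearity coincides with the Shapley feature value. -/
theorem shapley_characterization {ι : Type*} [DecidableEq ι]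
    (N : Finset ι) (ψ : (Finset ι → ℝ) → ι → ℝ)
    (heff : ∀ v : Finset ι → ℝ, v ∅ = 0 → ∑ a ∈ N, ψ v a = v N)
    (hnull : ∀ v : Finset ι → ℝ, v ∅ = 0 → ∀ a ∈ N,
      (∀ S ⊆ N.erase a, v (insert a S) = v S) → ψ v a = 0)
    (hsym : ∀ v : Finset ι → ℝ, v ∅ = 0 → ∀ a ∈ N, ∀ b ∈ N,
      (∀ S ⊆ (N.erase a).erase b, v (insert a S) = v (insert b S)) →
        ψ v a = ψ v b)
    (hadd : ∀ v₁ v₂ : Finset ι → ℝ, v₁ ∅ = 0 → v₂ ∅ = 0 → ∀ a ∈ N,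
      ψ (fun S => v₁ S + v₂ S) a = ψ v₁ a + ψ v₂ a)
    (hsmul : ∀ v : Finset ι → ℝ, v ∅ = 0 → ∀ c : ℝ, ∀ a ∈ N,
      ψ (fun S => c * v S) a = c * ψ v a) :
    ∀ v : Finset ι → ℝ, v ∅ = 0 → ∀ a ∈ N,
      ψ v a = shapleyFeatureValue N v a := by
  intro v hv a ha
  have hexp : ψ v a = ∑ T ∈ N.powerset.erase ∅, v T * ψ (coalitionGame T) a := by
    rw [← value_sum_coalitionGame N ψ hadd hsmul v ha _ (notMem_erase _ _)]
    refine value_congr N ψ hnull hadd hv (fun S hS => ?_) ha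
    rw [sum_erase _ (by simp [hv])]
    simp [coalitionGame, hS]
  rw [hexp, sum_erase _ (by simp [hv])]
  nth_rewrite 1 [← insert_erase ha]
  rw [sum_powerset_insert (notMem_erase a N), ← sum_add_distrib, shapleyFeatureValue]
  refine sum_congr rfl fun S hS => ?_
  have hSe : S ⊆ N.erase a := mem_powerset.1 hS
  have hSN : S ⊆ N := hSe.trans (erase_subset a N)
  have haS : a ∉ S := fun h => by simpa using hSe h
  have hle : S.card + 1 ≤ N.card := by
    rw [← card_insert_of_notMem haS]
    exact card_le_card (insert_subset ha hSN)
  have hin := value_coalitionGame_of_mem N ψ heff hnull hsym hadd (N.card - S.card - 1)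
    (insert a S) (insert_subset ha hSN) (by rw [card_insert_of_notMem haS]; omega)
    a (mem_insert_self a S)
  rw [card_insert_of_notMem haS, Nat.add_sub_cancel] at hin
  rcases S.eq_empty_or_nonempty with rfl | hS0
  -- The coefficient of `v ∅` is unknown, but `v ∅ = 0`.
  · rw [hin, hv]; ring
  · rw [value_coalitionGame_of_notMem N ψ hnull hadd hS0 ha haS, hin]; ring
end

section
/- (Young-type characterization, matching the paper's Axioms 1 and 2.) Let N be a finite set of n features. Suppose ψ assigns to every game v : 𝒫(N) → ℝ with v(∅) = 0 a vector (ψ_a(v))_{a ∈ N} satisfying: (i) transferability/efficiency, ∑_{a ∈ N} ψ_a(v) = v(N); (ii) symmetry, if v(S ∪ {a}) = v(S ∪ {b}) for all S ⊆ N \ {a,b} then ψ_a(v) = ψ_b(v); and (iii) strong monotonicity, for all games v₁, v₂ and all a ∈ N, if v₁(S ∪ {a}) − v₁(S) ≥ v₂(S ∪ {a}) − v₂(S) for every S ⊆ N \ {a}, then ψ_a(v₁) ≥ ψ_a(v₂). Then ψ is the Shapley feature value: ψ_a(v) = ∑_{S ⊆ N \ {a}} (|S|!(n−|S|−1)!/n!)(v(S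 ∪ {a}) − v(S)) for every game v and every a ∈ N. -/
/-!
Every game on `N` is, on subsets of `N`, a combination `v S = ∑ T ⊆ S, c T` of unanimity games
(`exists_coeff`). The proof is by induction on the set `F` of coalitions `T` that are allowed to
appear in this combination. If a feature `a` misses some `T ∈ F`, then removing from `F` all the
coalitions that miss `a` changes no marginal contribution of `a`, so neither `ψ · a` (by strong
monotonicity applied twice) nor the Shapley value of `a` changes, and the induction hypothesis
applies to the smaller game. The features lying in every `T ∈ F` are pairwise symmetric, so `ψ` and
the Shapley value are each constant on them; as both are efficient (`shapley_efficient`) and agree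
on all other features, they agree on these as well.
-/

open Finset

/-- The weight of a coalition of size `k` in the Shapley value for `n` features. -/
noncomputable def shapleyWeight (n k : ℕ) : ℝ :=
  (Nat.factorial k * Nat.factorial (n - k - 1) : ℝ) / (Nat.factorial n : ℝ)

/-- The Shapley value with its terms collected by the coalition at which `v` is evaluated. -/
lemma shapley_eq_sum_powerset {ι : Type*} [DecidableEq ι] (N : Finset ι) (v : Finset ι → ℝ)
    {a : ι} (ha : a ∈ N) :
    shapleyFeatureValue N v a = ∑ R ∈ N.powerset,
      (if a ∈ R then shapleyWeight N.card (R.card - 1) else -shapleyWeight N.card R.card) * v R := by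
  conv_rhs => rw [← Finset.insert_erase ha, Finset.sum_powerset_insert (Finset.notMem_erase a N),
    Finset.insert_erase ha, ← Finset.sum_add_distrib]
  unfold shapleyFeatureValue
  refine Finset.sum_congr rfl fun S hS => ?_
  have haS : a ∉ S := fun h => Finset.notMem_erase a N (Finset.mem_powerset.1 hS h)
  simp only [haS, if_false, Finset.mem_insert_self, if_true, Finset.card_insert_of_notMem haS,
    Nat.add_sub_cancel, shapleyWeight]
  ring

/-- The total coefficient of `v R` in the sum of all Shapley values. -/
lemma weight_balance (n k : ℕ) (hk : k ≤ n) :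
    (k : ℝ) * shapleyWeight n (k - 1) - ((n - k : ℕ) : ℝ) * shapleyWeight n k =
      (if k = n then 1 else 0) - (if k = 0 then 1 else 0) := by
  have hn : (n.factorial : ℝ) ≠ 0 := by exact_mod_cast n.factorial_ne_zero
  -- Away from the extremes both products equal `k! (n - k)! / n!`.
  have h1 : k ≠ 0 → (k : ℝ) * shapleyWeight n (k - 1) =
      k.factorial * (n - k).factorial / n.factorial := by
    intro h
    obtain ⟨j, rfl⟩ := Nat.exists_eq_succ_of_ne_zero h
    have : n - j - 1 = n - (j + 1) := by omega
    simp only [shapleyWeight, Nat.succ_eq_add_one, Nat.add_sub_cancel, Nat.factorial_succ, this]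
    push_cast
    ring
  have h2 : k ≠ n → ((n - k : ℕ) : ℝ) * shapleyWeight n k =
      k.factorial * (n - k).factorial / n.factorial := by
    intro h
    obtain ⟨j, hj⟩ := Nat.exists_eq_succ_of_ne_zero (show n - k ≠ 0 by omega)
    simp only [shapleyWeight, hj, Nat.succ_eq_add_one, Nat.add_sub_cancel, Nat.factorial_succ]
    push_cast
    ring
  by_cases k0 : k = 0 <;> by_cases kn : k = n
  · subst k0; subst kn; simp
  · rw [h2 kn]; subst k0; simp [kn, hn]
  · rw [h1 k0]; subst kn; simp [k0, hn]
  · rw [h1 k0, h2 kn]; simp [k0, kn]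

lemma shapley_efficient {ι : Type*} [DecidableEq ι] (N : Finset ι) (v : Finset ι → ℝ)
    (hv : v ∅ = 0) : ∑ a ∈ N, shapleyFeatureValue N v a = v N := by
  rw [Finset.sum_congr rfl fun a ha => shapley_eq_sum_powerset N v ha, Finset.sum_comm]
  have key : ∀ R ∈ N.powerset, (∑ a ∈ N, (if a ∈ R then shapleyWeight N.card (R.card - 1)
      else -shapleyWeight N.card R.card) * v R) = if R = N then v R else 0 := by
    intro R hR
    have hRN := Finset.mem_powerset.1 hR
    rw [← Finset.sum_mul, Finset.sum_ite, Finset.sum_const, Finset.sum_const,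
      Finset.filter_mem_eq_inter, Finset.inter_eq_right.2 hRN, Finset.filter_notMem_eq_sdiff,
      Finset.card_sdiff_of_subset hRN, nsmul_eq_mul, nsmul_eq_mul, mul_neg, ← sub_eq_add_neg,
      weight_balance _ _ (Finset.card_le_card hRN)]
    have e1 : R.card = N.card ↔ R = N :=
      ⟨fun h => Finset.eq_of_subset_of_card_le hRN h.ge, fun h => h ▸ rfl⟩
    simp only [e1, Finset.card_eq_zero]
    by_cases hR0 : R = ∅
    · rw [hR0, hv]; simp
    · simp [hR0]
  rw [Finset.sum_congr rfl key]
  simp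

lemma shapley_symm {ι : Type*} [DecidableEq ι] (N : Finset ι) (v : Finset ι → ℝ)
    {a b : ι} (ha : a ∈ N) (hb : b ∈ N)
    (h : ∀ S ⊆ (N.erase a).erase b, v (insert a S) = v (insert b S)) :
    shapleyFeatureValue N v a = shapleyFeatureValue N v b := by
  rcases eq_or_ne a b with rfl | hab
  · rfl
  have hA : N.erase a = insert b ((N.erase a).erase b) :=
    (Finset.insert_erase (Finset.mem_erase.2 ⟨hab.symm, hb⟩)).symm
  have hB : N.erase b = insert a ((N.erase a).erase b) := by
    rw [Finset.erase_right_comm]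
    exact (Finset.insert_erase (Finset.mem_erase.2 ⟨hab, ha⟩)).symm
  have hbM : b ∉ (N.erase a).erase b := Finset.notMem_erase _ _
  have haM : a ∉ (N.erase a).erase b := by simp
  unfold shapleyFeatureValue
  rw [hA, hB, Finset.sum_powerset_insert hbM, Finset.sum_powerset_insert haM,
    ← Finset.sum_add_distrib, ← Finset.sum_add_distrib]
  refine Finset.sum_congr rfl fun S hS => ?_
  have hSM := Finset.mem_powerset.1 hS
  rw [Finset.card_insert_of_notMem fun hx => hbM (hSM hx),
    Finset.card_insert_of_notMem fun hx => haM (hSM hx), h S hSM, Finset.insert_comm a b S]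

/-- Möbius inversion: every set function is a combination of unanimity games. -/
lemma exists_coeff {ι : Type*} [DecidableEq ι] (v : Finset ι → ℝ) :
    ∃ c : Finset ι → ℝ, ∀ S, v S = ∑ T ∈ S.powerset, c T := by
  let c : Finset ι → ℝ := Finset.strongInduction fun T rec =>
    v T - ∑ R ∈ T.ssubsets.attach, rec R.1 (Finset.mem_ssubsets.1 R.2)
  have hc : ∀ T, c T = v T - ∑ R ∈ T.ssubsets, c R := by
    intro T
    rw [← Finset.sum_attach]
    exact Finset.strongInduction_eq _ T
  refine ⟨c, fun S => ?_⟩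
  have : S.powerset.erase S = S.ssubsets := rfl
  rw [← Finset.add_sum_erase _ _ (Finset.mem_powerset_self S), this, hc S]
  ring

/-- Young-type characterization: any value `ψ` satisfying
transferability/efficiency, symmetry, and strong monotonicity coincides with
the Shapley feature value. -/
theorem shapley_young_characterization {ι : Type*} [DecidableEq ι]
    (N : Finset ι) (ψ : (Finset ι → ℝ) → ι → ℝ)
    (heff : ∀ v : Finset ι → ℝ, v ∅ = 0 → ∑ a ∈ N, ψ v a = v N)
    (hsym : ∀ v : Finset ι → ℝ, v ∅ = 0 → ∀ a ∈ N, ∀ b ∈ N,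
      (∀ S ⊆ (N.erase a).erase b, v (insert a S) = v (insert b S)) →
        ψ v a = ψ v b)
    (hmono : ∀ v₁ v₂ : Finset ι → ℝ, v₁ ∅ = 0 → v₂ ∅ = 0 → ∀ a ∈ N,
      (∀ S ⊆ N.erase a,
        v₁ (insert a S) - v₁ S ≥ v₂ (insert a S) - v₂ S) →
      ψ v₁ a ≥ ψ v₂ a) :
    ∀ v : Finset ι → ℝ, v ∅ = 0 → ∀ a ∈ N,
      ψ v a = shapleyFeatureValue N v a := by
  -- Equal marginal contributions give equal payoffs.
  have hmarg : ∀ v₁ v₂ : Finset ι → ℝ, v₁ ∅ = 0 → v₂ ∅ = 0 → ∀ a ∈ N,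
      (∀ S ⊆ N.erase a, v₁ (insert a S) - v₁ S = v₂ (insert a S) - v₂ S) → ψ v₁ a = ψ v₂ a :=
    fun v₁ v₂ h₁ h₂ a ha h => le_antisymm
      (hmono v₂ v₁ h₂ h₁ a ha fun S hS => (h S hS).le)
      (hmono v₁ v₂ h₁ h₂ a ha fun S hS => (h S hS).ge)
  have main : ∀ (c : Finset ι → ℝ) (F : Finset (Finset ι)) (v : Finset ι → ℝ), v ∅ = 0 →
      (∀ S ⊆ N, v S = ∑ T ∈ F with T ⊆ S, c T) →
      ∀ a ∈ N, ψ v a = shapleyFeatureValue N v a := by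
    intro c F
    induction F using Finset.strongInduction with
    | H F ih =>
    intro v hv hF
    have hout : ∀ a ∈ N, ¬ (∀ T ∈ F, a ∈ T) → ψ v a = shapleyFeatureValue N v a := by
      intro a ha hna
      push Not at hna
      obtain ⟨T₀, hT₀, haT₀⟩ := hna
      -- `v'` drops the coalitions missing `a`, which contribute nothing to the marginals of `a`.
      let v' : Finset ι → ℝ := fun S => ∑ T ∈ F with a ∈ T ∧ T ⊆ S, c T
      have hv'0 : v' ∅ = 0 := by
        refine Finset.sum_eq_zero fun T hT => ?_
        have h := (Finset.mem_filter.1 hT).2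
        exact absurd (h.2 h.1) (Finset.notMem_empty a)
      have hsplit : ∀ S ⊆ N, v S = v' S + ∑ T ∈ F with a ∉ T ∧ T ⊆ S, c T := by
        intro S hS
        rw [hF S hS, ← Finset.sum_filter_add_sum_filter_not (F.filter (· ⊆ S)) (a ∈ ·)]
        simp only [Finset.filter_filter, and_comm, v']
      have hm : ∀ S ⊆ N.erase a, v (insert a S) - v S = v' (insert a S) - v' S := by
        intro S hS
        have hSN := hS.trans (Finset.erase_subset a N)
        have : (F.filter fun T => a ∉ T ∧ T ⊆ insert a S) = F.filter fun T => a ∉ T ∧ T ⊆ S :=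
          Finset.filter_congr fun T _ =>
            and_congr_right fun haT => Finset.subset_insert_iff_of_notMem haT
        rw [hsplit S hSN, hsplit _ (Finset.insert_subset ha hSN), this]
        ring
      rw [hmarg v v' hv hv'0 a ha hm, ih (F.filter (a ∈ ·))
        (Finset.filter_ssubset.2 ⟨T₀, hT₀, haT₀⟩) v' hv'0
        (fun S _ => by simp only [Finset.filter_filter, v']) a ha]
      refine Finset.sum_congr rfl fun S hS => ?_
      rw [hm S (Finset.mem_powerset.1 hS)]
    have hinter : ∀ a ∈ N, ∀ b ∈ N, (∀ T ∈ F, a ∈ T) → (∀ T ∈ F, b ∈ T) →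
        ∀ S ⊆ (N.erase a).erase b, v (insert a S) = v (insert b S) := by
      intro a ha b hb haF hbF S hS
      rcases eq_or_ne a b with rfl | hab
      · rfl
      have hSN : S ⊆ N := hS.trans ((Finset.erase_subset _ _).trans (Finset.erase_subset _ _))
      have haS : a ∉ S := fun h => by simpa using hS h
      have hbS : b ∉ S := fun h => by simpa using hS h
      -- No `T ∈ F` fits into a coalition missing `a` or `b`, so both sides vanish.
      rw [hF _ (Finset.insert_subset ha hSN), hF _ (Finset.insert_subset hb hSN),
        Finset.filter_false_of_mem, Finset.filter_false_of_mem]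
      · intro T hT hTS
        simpa [hab, haS] using hTS (haF T hT)
      · intro T hT hTS
        simpa [hab.symm, hbS] using hTS (hbF T hT)
    intro a ha
    by_cases haF : ∀ T ∈ F, a ∈ T
    swap
    · exact hout a ha haF
    classical
    have hsum : ∑ b ∈ N, (ψ v b - shapleyFeatureValue N v b) = 0 := by
      rw [Finset.sum_sub_distrib, heff v hv, shapley_efficient N v hv, sub_self]
    have hval : ∀ b ∈ N, ψ v b - shapleyFeatureValue N v b =
        if ∀ T ∈ F, b ∈ T then ψ v a - shapleyFeatureValue N v a else 0 := by
      intro b hb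
      split_ifs with hbF
      · have h := hinter a ha b hb haF hbF
        rw [hsym v hv a ha b hb h, shapley_symm N v ha hb h]
      · rw [hout b hb hbF, sub_self]
    rw [Finset.sum_congr rfl hval, ← Finset.sum_filter, Finset.sum_const, nsmul_eq_mul,
      mul_eq_zero] at hsum
    rcases hsum with h | h
    · have h0 := Finset.card_eq_zero.1 (Nat.cast_eq_zero.1 h)
      exact absurd (Finset.mem_filter.2 ⟨ha, haF⟩) (h0 ▸ Finset.notMem_empty a)
    · exact sub_eq_zero.1 h
  intro v hv a ha
  obtain ⟨c, hc⟩ := exists_coeff v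
  refine main c N.powerset v hv (fun S hS => ?_) a ha
  rw [hc S]
  refine Finset.sum_congr ?_ fun _ _ => rfl
  ext T
  simp only [Finset.mem_powerset, Finset.mem_filter]
  exact ⟨fun h => ⟨h.trans hS, h⟩, fun h => h.2⟩
end
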